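/- arXiv:1909.06409 — 2 statements merged into one kernel-verified Lean document; each statement's English description precedes it below -/
import Mathlib

section
/- Let q be a prime power, let n ≥ 1, and let f(x) = Σ_{i=0}^{n−1} a_i x^{q^i} ∈ F_{q^n}[x]. Then f is scattered if and only if the polynomials H_0(y) and H_1(y) have no common root (in the algebraic closure of F_q, equivalently in F_{q^n}). -/
/-!
Write `f_z(x) = z x + ∑_{i ≥ 1} a_i x^{q^i}`, so that `f(x) = c x` iff `f_z(x) = 0` with
`z = a_0 - c`. For `z ∈ F`, the value `H_0(z)` is the determinant of the Dickson matrix `D` of `f_z`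
and `H_1(z)` is its minor without the first column and the last row. Three facts give the result.

* `card_directions_iff`: `f` is scattered iff any two nonzero solutions of `f(x) = c x` have a ratio
  `u` with `u^{q-1} = 1`, because the directions are the image of the quotient of `Fˣ` by the
  `(q-1)`-th roots of unity, which has `(q^n - 1)/(q - 1)` elements.
* `minor_eq_zero_of_roots` and `exists_roots_of_minor`: for `z ∈ F`, both `H_0(z)` and `H_1(z)`
  vanish iff `f_z` has two roots in `F` that are independent over `F_q`. A root `x` gives the vector
  `(x^{q^j})_j` in `ker D`; two independent ones combine to a nonzero kernel vector with vanishing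
  coordinate `0`, which the minor annihilates. Conversely, if `D` is singular, then a twisted trace
  of a left kernel vector gives a left kernel vector `(y^{q^i})_i` with no zero coordinate, so a
  vector `(0, w)` annihilated by all rows of `D` but the last is annihilated by the last one too.
  The twisted traces of the multiples of `(0, w)` are roots of `f_z`, and they do not all lie on one
  `F_q`-line, by the linear independence of the maps `β ↦ β^{q^i}`.
* `Hpoly_zero_degree` and `root_mem_of_card`: `H_0` is nonzero of degree at most
  `1 + q + ⋯ + q^{n-1}`. If `f` is scattered, the directions already provide that many roots in
  `F`, so `H_0` has no other root in the algebraic closure.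
-/

/-- `H_m(y) ∈ F_{q^n}[y]`: the determinant of the `(n-m) × (n-m)` matrix obtained from
the matrix `H(y)` (the Dickson matrix of `f = ∑_{i=0}^{n-1} a_i x^{q^i}` with each
diagonal entry `a_0^{q^i}` replaced by `y^{q^i}`) by removing its first `m` columns and
last `m` rows. -/
noncomputable def Hpoly (q n m : ℕ) {F : Type*} [Field F] (a : ℕ → F) : Polynomial F :=
  (Matrix.of fun i j : Fin (n - m) =>
      if i.val = j.val + m then Polynomial.X ^ q ^ i.val
      else Polynomial.C (a ((j.val + m + n - i.val) % n) ^ q ^ i.val)).det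

/-! ### Kernels of Dickson matrices -/

section
variable {k : ℕ} {F : Type*} [Field F] (σ : Fin (k + 1) → F →+* F)

/-- The Dickson matrix of the map `x ↦ ∑ j, b j * σ j x`, where `σ j` stands for the `q^j`-power map.
The index set `Fin (k + 1)` carries its cyclic group structure, so `j - i` is taken modulo `k + 1`. -/
def dicksonMat (b : Fin (k + 1) → F) : Matrix (Fin (k + 1)) (Fin (k + 1)) F :=
  Matrix.of fun i j => σ i (b (j - i))

/-- `σ` is an action of the cyclic group `Fin (k + 1)` on `F` by ring endomorphisms that are
linearly independent over `F`. This is all that is used about the powers of the `q`-Frobenius. -/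
structure IsCyclicAction : Prop where
  map_zero : ∀ x, σ 0 x = x
  map_add : ∀ i j x, σ (i + j) x = σ i (σ j x)
  indep : ∀ c : Fin (k + 1) → F, (∀ β, ∑ i, c i * σ i β = 0) → ∀ i, c i = 0

variable {σ}

/-- On the vector of conjugates of `x`, the Dickson matrix gives the conjugates of the value at `x`
of the associated map. -/
theorem dickson_mulVec_conj (hσ : IsCyclicAction σ) (b : Fin (k + 1) → F) (x : F) (i : Fin (k + 1)) :
    (dicksonMat σ b).mulVec (fun j => σ j x) i = σ i (∑ j, b j * σ j x) := by
  simp only [Matrix.mulVec, dotProduct, dicksonMat, Matrix.of_apply, map_sum, map_mul]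
  conv_rhs => rw [← Equiv.sum_comp (Equiv.subRight i)]
  refine Finset.sum_congr rfl fun j _ => ?_
  rw [← hσ.map_add]
  simp

/-- The twisted trace `∑ m, σ m (v (-m))` of a kernel vector `v` is a root of the associated map: it
is coordinate `0` of the sum of the orbit of `v` under the semilinear shift `v ↦ (σ m (v (j - m)))_j`,
which preserves the kernel. -/
theorem sum_trace_eq_zero (hσ : IsCyclicAction σ) (b v : Fin (k + 1) → F) (hv : (dicksonMat σ b).mulVec v = 0) :
    ∑ j, b j * σ j (∑ m, σ m (v (-m))) = 0 := by
  have h1 : ∀ m, ∑ j, b j * σ m (v (j - m)) = 0 := by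
    intro m
    have h := congrArg (σ m) (congrFun hv (-m))
    simp only [Matrix.mulVec, dotProduct, dicksonMat, Matrix.of_apply, map_sum, map_mul,
      Pi.zero_apply, _root_.map_zero] at h
    rw [← Equiv.sum_comp (Equiv.subRight m)] at h
    rw [← h]
    refine Finset.sum_congr rfl fun j _ => ?_
    rw [← hσ.map_add]
    simp [hσ.map_zero]
  calc ∑ j, b j * σ j (∑ m, σ m (v (-m)))
      = ∑ j, ∑ m, b j * σ m (v (j - m)) := by
        refine Finset.sum_congr rfl fun j _ => ?_
        rw [map_sum, Finset.mul_sum]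
        conv_rhs => rw [← Equiv.sum_comp (Equiv.addLeft j)]
        refine Finset.sum_congr rfl fun m _ => ?_
        rw [← hσ.map_add]
        simp
    _ = 0 := by
        rw [Finset.sum_comm]
        exact Finset.sum_eq_zero fun m _ => h1 m

theorem exists_trace_ne_zero (hσ : IsCyclicAction σ) (v : Fin (k + 1) → F) (hv : v ≠ 0) :
    ∃ β, ∑ m, σ m (β * v (-m)) ≠ 0 := by
  by_contra! h
  apply hv
  funext i
  have := hσ.indep (fun m => σ m (v (-m))) (fun β => by
    rw [← h β]
    exact Finset.sum_congr rfl fun m _ => by rw [map_mul, mul_comm]) (-i)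
  simpa using this

theorem dickson_mulVec_smul (b v : Fin (k + 1) → F) (hv : (dicksonMat σ b).mulVec v = 0) (β : F) :
    (dicksonMat σ b).mulVec (fun j => β * v j) = 0 := by
  have : (fun j => β * v j) = β • v := rfl
  rw [this, Matrix.mulVec_smul, hv, smul_zero]

theorem exists_root_of_det (hσ : IsCyclicAction σ) (b : Fin (k + 1) → F) (h : (dicksonMat σ b).det = 0) :
    ∃ x, x ≠ 0 ∧ ∑ j, b j * σ j x = 0 := by
  obtain ⟨v, hv, hv0⟩ := Matrix.exists_mulVec_eq_zero_iff.mpr h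
  obtain ⟨β, hβ⟩ := exists_trace_ne_zero hσ v hv
  exact ⟨_, hβ, sum_trace_eq_zero hσ b _ (dickson_mulVec_smul b v hv0 β)⟩

/-- The transpose is the Dickson matrix of the adjoint map. -/
theorem dickson_transpose (hσ : IsCyclicAction σ) (b : Fin (k + 1) → F) :
    (dicksonMat σ b).transpose = dicksonMat σ (fun m => σ m (b (-m))) := by
  ext i j
  simp [dicksonMat, ← hσ.map_add]

/-- A singular Dickson matrix has a left kernel vector consisting of the conjugates of some `y ≠ 0`;
in particular none of its coordinates vanishes. -/
theorem exists_left_kernel (hσ : IsCyclicAction σ) (b : Fin (k + 1) → F) (h : (dicksonMat σ b).det = 0) :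
    ∃ y, y ≠ 0 ∧ ∀ v, ∑ i, σ i y * (dicksonMat σ b).mulVec v i = 0 := by
  rw [← Matrix.det_transpose, dickson_transpose hσ] at h
  obtain ⟨y, hy, hy0⟩ := exists_root_of_det hσ _ h
  refine ⟨y, hy, fun v => ?_⟩
  have h2 : (dicksonMat σ b).transpose.mulVec (fun j => σ j y) = 0 := by
    rw [dickson_transpose hσ]
    funext i
    rw [dickson_mulVec_conj hσ, hy0, _root_.map_zero, Pi.zero_apply]
  change (fun j => σ j y) ⬝ᵥ _ = 0
  rw [Matrix.dotProduct_mulVec, ← Matrix.mulVec_transpose, h2, zero_dotProduct]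

theorem det_eq_zero_of_root (hσ : IsCyclicAction σ) (b : Fin (k + 1) → F) (x : F) (hx : x ≠ 0)
    (h : ∑ j, b j * σ j x = 0) : (dicksonMat σ b).det = 0 := by
  refine Matrix.exists_mulVec_eq_zero_iff.mp ⟨fun j => σ j x, fun h0 => hx ?_, ?_⟩
  · have := congrFun h0 0
    simpa using this
  · funext i
    rw [dickson_mulVec_conj hσ, h, _root_.map_zero, Pi.zero_apply]

theorem submatrix_mulVec (b v : Fin (k + 1) → F) (h0 : v 0 = 0) (i : Fin k) :
    ((dicksonMat σ b).submatrix Fin.castSucc Fin.succ).mulVec (fun j => v j.succ) i =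
      (dicksonMat σ b).mulVec v i.castSucc := by
  simp [Matrix.mulVec, dotProduct, Fin.sum_univ_succ, h0]

theorem minor_eq_zero_of_roots (hσ : IsCyclicAction σ) (b : Fin (k + 1) → F) (x x' : F)
    (h : ∑ j, b j * σ j x = 0) (h' : ∑ j, b j * σ j x' = 0)
    (hxx : ∃ g, σ g x * x' ≠ x * σ g x') :
    ((dicksonMat σ b).submatrix Fin.castSucc Fin.succ).det = 0 := by
  obtain ⟨g, hg⟩ := hxx
  have hg0 : g ≠ 0 := by
    rintro rfl
    simp [hσ.map_zero] at hg
  obtain ⟨j, rfl⟩ := Fin.exists_succ_eq.mpr hg0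
  set v : Fin (k + 1) → F := x' • (fun j => σ j x) - x • (fun j => σ j x') with hv
  have hv0 : v 0 = 0 := by simp [hv, hσ.map_zero, mul_comm]
  refine Matrix.exists_mulVec_eq_zero_iff.mp ⟨fun j => v j.succ, fun h0 => hg ?_, ?_⟩
  · have := congrFun h0 j
    simp only [hv, Pi.sub_apply, Pi.smul_apply, smul_eq_mul, Pi.zero_apply] at this
    linear_combination this
  · funext i
    rw [submatrix_mulVec b v hv0, hv, Matrix.mulVec_sub, Matrix.mulVec_smul, Matrix.mulVec_smul]
    simp [dickson_mulVec_conj hσ, h, h']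

theorem exists_roots_of_minor (hσ : IsCyclicAction σ) (b : Fin (k + 1) → F) (h : (dicksonMat σ b).det = 0)
    (h1 : ((dicksonMat σ b).submatrix Fin.castSucc Fin.succ).det = 0) :
    ∃ x x', x ≠ 0 ∧ x' ≠ 0 ∧ ∑ j, b j * σ j x = 0 ∧ ∑ j, b j * σ j x' = 0 ∧
      ∃ g, σ g x * x' ≠ x * σ g x' := by
  obtain ⟨w, hw, hw0⟩ := Matrix.exists_mulVec_eq_zero_iff.mpr h1
  obtain ⟨y, hy, hyl⟩ := exists_left_kernel hσ b h
  set v : Fin (k + 1) → F := Fin.cons 0 w with hv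
  have hv0 : v 0 = 0 := rfl
  have hvne : v ≠ 0 := fun h => hw (funext fun j => by simpa [hv] using congrFun h j.succ)
  have hcast : ∀ i : Fin k, (dicksonMat σ b).mulVec v i.castSucc = 0 := fun i => by
    rw [← submatrix_mulVec b v hv0]
    simpa [hv] using congrFun hw0 i
  -- the left kernel vector has a nonzero last coordinate, so the last row also annihilates `v`
  have hDv : (dicksonMat σ b).mulVec v = 0 := by
    funext i
    refine Fin.lastCases ?_ (fun i => hcast i) i
    have := hyl v
    rw [Fin.sum_univ_castSucc] at this
    simp only [hcast, mul_zero, Finset.sum_const_zero, zero_add] at this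
    exact (mul_eq_zero.mp this).resolve_left ((map_ne_zero _).mpr hy)
  have hT : ∀ β, ∑ j, b j * σ j (∑ m, σ m (β * v (-m))) = 0 := fun β =>
    sum_trace_eq_zero hσ b _ (dickson_mulVec_smul b v hDv β)
  obtain ⟨β₀, hβ₀⟩ := exists_trace_ne_zero hσ v hvne
  set x := ∑ m, σ m (β₀ * v (-m)) with hx
  by_contra! hcon
  apply hvne
  funext g
  have key : ∀ β, σ g (∑ m, σ m (β * v (-m))) * x = (∑ m, σ m (β * v (-m))) * σ g x := by
    intro β
    by_cases h0 : ∑ m, σ m (β * v (-m)) = 0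
    · rw [h0, _root_.map_zero, zero_mul, zero_mul]
    · exact hcon _ x h0 hβ₀ (hT β) (hT β₀) g
  -- comparing coefficients of `σ m β` in `key`; the one at `m = 0` relates `v g` to `v 0 = 0`
  have := hσ.indep (fun m => σ m (v (g - m)) * x - σ m (v (-m)) * σ g x) (fun β => by
    rw [← sub_eq_zero.mpr (key β), map_sum (σ g) (fun m => σ m (β * v (-m))),
      Finset.sum_mul, Finset.sum_mul,
      ← Equiv.sum_comp (Equiv.subRight g) (fun m => σ g (σ m (β * v (-m))) * x),
      ← Finset.sum_sub_distrib]
    refine Finset.sum_congr rfl fun m _ => ?_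
    rw [← hσ.map_add]
    simp only [Equiv.subRight_apply, map_mul, add_sub_cancel, neg_sub]
    ring) 0
  simpa [hv0, hβ₀] using this
end

/-! ### Degree and roots of `H_0` -/

open Polynomial

/-- Only the identity permutation contributes the top term `X ^ (1 + q + ⋯ + q ^ (n - 1))` of the
determinant. -/
theorem Hpoly_zero_degree {F : Type*} [Field F] (q n : ℕ) (hq : 2 ≤ q) (a : ℕ → F) :
    Hpoly q n 0 a ≠ 0 ∧ (Hpoly q n 0 a).natDegree ≤ ∑ i ∈ Finset.range n, q ^ i := by
  set N := ∑ i ∈ Finset.range n, q ^ i with hN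
  have hN' : N = ∑ i : Fin n, q ^ i.val := (Fin.sum_univ_eq_sum_range _ _).symm
  set M : Matrix (Fin n) (Fin n) F[X] := Matrix.of fun i j =>
      if i.val = j.val + 0 then X ^ q ^ i.val
      else C (a ((j.val + 0 + n - i.val) % n) ^ q ^ i.val) with hM
  have hdet : Hpoly q n 0 a = M.det := rfl
  have hent : ∀ i j : Fin n, (M i j).natDegree ≤ if i = j then q ^ j.val else 0 := by
    intro i j
    simp only [hM, Matrix.of_apply, add_zero, Fin.val_inj]
    split_ifs with h
    · simp [h]
    · exact (natDegree_C _).le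
  have hprod : ∀ s : Equiv.Perm (Fin n),
      (∏ i, M (s i) i).natDegree ≤ ∑ i : Fin n, if s i = i then q ^ i.val else 0 := fun s =>
    (natDegree_prod_le _ _).trans (Finset.sum_le_sum fun i _ => hent _ _)
  have hle : ∀ s : Equiv.Perm (Fin n),
      (∑ i : Fin n, if s i = i then q ^ i.val else 0) ≤ N := fun s => by
    rw [hN']
    exact Finset.sum_le_sum fun i _ => by split_ifs <;> simp
  have hcoeff : (Hpoly q n 0 a).coeff N = 1 := by
    rw [hdet, Matrix.det_apply, finsetSum_coeff, Finset.sum_eq_single 1]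
    · have : ∀ i, M i i = X ^ q ^ i.val := fun i => by simp [hM]
      simp [this, Finset.prod_pow_eq_pow_sum, ← hN']
    · intro s _ hs
      have hlt : (∏ i, M (s i) i).natDegree < N := by
        refine (hprod s).trans_lt ?_
        obtain ⟨i, hi⟩ : ∃ i, s i ≠ i := by
          by_contra! h
          exact hs (Equiv.ext h)
        rw [hN']
        refine Finset.sum_lt_sum (fun i _ => by split_ifs <;> simp) ⟨i, Finset.mem_univ _, ?_⟩
        rw [if_neg hi]
        positivity
      rw [coeff_smul, coeff_eq_zero_of_natDegree_lt hlt, smul_zero]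
    · simp
  refine ⟨fun h => by simp [h] at hcoeff, ?_⟩
  rw [hdet, Matrix.det_apply]
  refine natDegree_sum_le_of_forall_le _ _ fun s _ => ?_
  exact (natDegree_smul_le _ _).trans ((hprod s).trans (hle s))

/-- If a nonzero polynomial over `F` has as many distinct roots in `F` as its degree, then it has no
further roots in the algebraic closure. -/
theorem root_mem_of_card {F : Type*} [Field F] (P : F[X]) (hP : P ≠ 0)
    (S : Finset F) (hS : ∀ y ∈ S, P.eval y = 0) (hcard : P.natDegree ≤ S.card)
    (z : AlgebraicClosure F) (hz : aeval z P = 0) : ∃ y : F, algebraMap F _ y = z := by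
  classical
  by_contra! h
  have hinj := FaithfulSMul.algebraMap_injective F (AlgebraicClosure F)
  have hsub : insert z (S.image (algebraMap F (AlgebraicClosure F))) ⊆
      (P.map (algebraMap F (AlgebraicClosure F))).roots.toFinset := by
    have hP' := (Polynomial.map_ne_zero_iff hinj).mpr hP
    intro w hw
    rw [Multiset.mem_toFinset, mem_roots hP', IsRoot, eval_map]
    rcases Finset.mem_insert.mp hw with rfl | hw
    · exact hz
    · obtain ⟨y, hy, rfl⟩ := Finset.mem_image.mp hw
      rw [eval₂_at_apply, hS y hy, map_zero]
  have h1 := Finset.card_le_card hsub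
  rw [Finset.card_insert_of_notMem (by simp [h]), Finset.card_image_of_injective _ hinj] at h1
  have h2 := (Multiset.toFinset_card_le _).trans
    (card_roots' (P.map (algebraMap F (AlgebraicClosure F))))
  rw [natDegree_map] at h2
  omega

/-! ### Specialization to powers of the Frobenius -/

section
variable {k : ℕ} {F : Type*} [Field F]

/-- The map `x ↦ x ^ q ^ i` with `q = p ^ e`, as a ring endomorphism. -/
def frobPow (F : Type*) [Field F] (p e k : ℕ) [ExpChar F p] (i : Fin (k + 1)) : F →+* F :=
  iterateFrobenius F p (e * i.val)

theorem frobPow_apply (p e : ℕ) [ExpChar F p] (i : Fin (k + 1)) (x : F) :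
    frobPow F p e k i x = x ^ (p ^ e) ^ i.val := by
  rw [frobPow, iterateFrobenius_def, pow_mul]

/-- Additivity in the index is `x ^ q ^ (k + 1) = x`; independence is Dedekind's theorem, the maps
being told apart by their values at a generator of `Fˣ`. -/
theorem frobPow_isCyclicAction [Fintype F] (p e : ℕ) [ExpChar F p] (hq : 2 ≤ p ^ e)
    (hF : Fintype.card F = (p ^ e) ^ (k + 1)) : IsCyclicAction (frobPow F p e k) := by
  set q := p ^ e with hqdef
  refine ⟨fun x => by simp [frobPow_apply], fun i j x => ?_, fun c hc => ?_⟩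
  · rw [frobPow_apply, frobPow_apply, frobPow_apply, ← hqdef, ← pow_mul x, ← pow_add,
      add_comm j.val, Fin.val_add]
    conv_rhs => rw [← Nat.mod_add_div (i.val + j.val) (k + 1), pow_add, pow_mul, pow_mul, ← hF,
      FiniteField.pow_card_pow]
  · obtain ⟨g, hg⟩ := IsCyclic.exists_ofOrder_eq_natCard (α := Fˣ)
    rw [Nat.card_units, Nat.card_eq_fintype_card, hF] at hg
    have hlt : ∀ i j : Fin (k + 1), i < j → g ^ q ^ i.val ≠ g ^ q ^ j.val := by
      intro i j hij h
      rw [pow_eq_pow_iff_modEq, hg, Nat.modEq_iff_dvd'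
        (Nat.pow_le_pow_right (by omega) (Fin.le_def.mp hij.le))] at h
      have h1 : q ^ i.val < q ^ j.val := Nat.pow_lt_pow_right (by omega) hij
      have h2 : q ^ j.val < q ^ (k + 1) := Nat.pow_lt_pow_right (by omega) j.2
      have h3 : 0 < q ^ i.val := by positivity
      have := Nat.le_of_dvd (by omega) h
      omega
    have hinj : Function.Injective fun i => (frobPow F p e k i : F →* F) := by
      intro i j hij
      have h : g ^ q ^ i.val = g ^ q ^ j.val := by
        have := DFunLike.congr_fun hij (g : F)
        simp only [MonoidHom.coe_coe, frobPow_apply] at this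
        ext
        simpa using this
      rcases lt_trichotomy i j with h' | h' | h'
      · exact absurd h (hlt _ _ h')
      · exact h'
      · exact absurd h.symm (hlt _ _ h')
    have hli := (linearIndependent_monoidHom F F).comp _ hinj
    refine Fintype.linearIndependent_iff.mp hli c (funext fun β => ?_)
    simpa using hc β

/-- The coefficients of `z x + ∑_{1 ≤ i ≤ k} a_i x^{q^i}`. -/
def qCoeff (a : ℕ → F) (z : F) (j : Fin (k + 1)) : F := if j = 0 then z else a j.val

theorem eval_entry (p e : ℕ) [ExpChar F p] (a : ℕ → F) (z : F) (i j : Fin (k + 1)) :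
    (if i.val = j.val then (X : F[X]) ^ (p ^ e) ^ i.val
      else C (a ((j.val + (k + 1) - i.val) % (k + 1)) ^ (p ^ e) ^ i.val)).eval z =
      dicksonMat (frobPow F p e k) (qCoeff a z) i j := by
  simp only [dicksonMat, Matrix.of_apply, frobPow_apply, qCoeff, sub_eq_zero]
  by_cases h : i = j
  · simp [h]
  · rw [if_neg (by rwa [Fin.val_inj]), if_neg (Ne.symm h), eval_C, Fin.val_sub]
    congr 4
    omega

theorem eval_Hpoly_zero (p e : ℕ) [ExpChar F p] (a : ℕ → F) (z : F) :
    (Hpoly (p ^ e) (k + 1) 0 a).eval z =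
      (dicksonMat (frobPow F p e k) (qCoeff a z)).det := by
  rw [Hpoly, ← coe_evalRingHom, RingHom.map_det]
  congr 1
  ext i j
  exact eval_entry p e a z i j

theorem eval_Hpoly_one (p e : ℕ) [ExpChar F p] (a : ℕ → F) (z : F) :
    (Hpoly (p ^ e) (k + 1) 1 a).eval z =
      ((dicksonMat (frobPow F p e k) (qCoeff a z)).submatrix Fin.castSucc Fin.succ).det := by
  rw [Hpoly, ← coe_evalRingHom, RingHom.map_det]
  congr 1
  ext i j
  exact eval_entry p e a z i.castSucc j.succ

theorem sum_qCoeff_eq_zero_iff (p e : ℕ) [ExpChar F p] (a : ℕ → F) (c x : F) :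
    ∑ j, qCoeff a (a 0 - c) j * frobPow F p e k j x = 0 ↔
      ∑ i ∈ Finset.range (k + 1), a i * x ^ (p ^ e) ^ i = c * x := by
  rw [← Fin.sum_univ_eq_sum_range (fun i => a i * x ^ (p ^ e) ^ i), Fin.sum_univ_succ,
    Fin.sum_univ_succ]
  simp only [qCoeff, frobPow_apply, Fin.succ_ne_zero, if_true, if_false, Fin.val_zero, pow_zero,
    pow_one]
  rw [← sub_eq_zero (b := c * x)]
  ring_nf
end

/-! ### Counting directions -/

/-- A map `f` homogeneous under the `(q - 1)`-th roots of unity has the maximal number of directions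
iff nonzero vectors with the same direction differ by such a root of unity. -/
theorem card_directions_iff {F : Type*} [Field F] [Fintype F] (q n : ℕ)
    (hF : Fintype.card F = q ^ n) (f : F → F)
    (hf : ∀ u x : F, u ^ (q - 1) = 1 → f (u * x) = u * f x) :
    Nat.card {c : F // ∃ x : F, x ≠ 0 ∧ f x = c * x} = (q ^ n - 1) / (q - 1) ↔
      ∀ c x x' : F, x ≠ 0 → x' ≠ 0 → f x = c * x → f x' = c * x' → (x / x') ^ (q - 1) = 1 := by
  have hcard : Nat.card (Fˣ ⧸ (powMonoidHom (q - 1) : Fˣ →* Fˣ).ker) = (q ^ n - 1) / (q - 1) := by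
    change Subgroup.index _ = _
    rw [IsCyclic.index_powMonoidHom_ker, Nat.card_units, Nat.card_eq_fintype_card, hF,
      Nat.gcd_eq_right (Nat.sub_one_dvd_pow_sub_one q n)]
  let φ : Fˣ → {c : F // ∃ x : F, x ≠ 0 ∧ f x = c * x} := fun x =>
    ⟨f x / x, x, x.ne_zero, by field_simp⟩
  have hφ : ∀ x y : Fˣ, x⁻¹ * y ∈ (powMonoidHom (q - 1) : Fˣ →* Fˣ).ker → φ x = φ y := by
    intro x y h
    rw [MonoidHom.mem_ker, powMonoidHom_apply] at h
    have h' : ((x⁻¹ * y : Fˣ) : F) ^ (q - 1) = 1 := by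
      rw [← Units.val_pow_eq_pow_val, h, Units.val_one]
    have := hf _ x h'
    apply Subtype.ext
    change f x / x = f y / y
    have hy : ((x⁻¹ * y : Fˣ) : F) * x = y := by
      rw [← Units.val_mul]; congr 1; rw [mul_comm, mul_inv_cancel_left]
    rw [hy] at this
    rw [this, ← hy]
    field_simp
  let ψ : Fˣ ⧸ (powMonoidHom (q - 1) : Fˣ →* Fˣ).ker → {c : F // ∃ x : F, x ≠ 0 ∧ f x = c * x} :=
    fun t => Quotient.liftOn' t φ fun x y h => hφ x y (QuotientGroup.leftRel_apply.mp h)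
  have hψ : Function.Surjective ψ := by
    rintro ⟨c, x, hx, h⟩
    refine ⟨QuotientGroup.mk (Units.mk0 x hx), Subtype.ext ?_⟩
    change f x / x = c
    rw [h]
    field_simp
  rw [← hcard]
  constructor
  · intro h c x x' hx hx' h1 h2
    have hbij := hψ.bijective_of_nat_card_le h.ge
    have : ψ (QuotientGroup.mk (Units.mk0 x' hx')) = ψ (QuotientGroup.mk (Units.mk0 x hx)) := by
      apply Subtype.ext
      change f x' / x' = f x / x
      rw [h1, h2]
      field_simp
    have := QuotientGroup.eq.mp (hbij.injective this)
    rw [MonoidHom.mem_ker, powMonoidHom_apply] at this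
    have := congrArg Units.val this
    simpa [div_eq_inv_mul] using this
  · intro h
    refine (Nat.card_congr (Equiv.ofBijective ψ ⟨fun s t => ?_, hψ⟩)).symm
    refine Quotient.inductionOn₂' s t fun x y hxy => ?_
    have hxy' : f x / x = f y / y := congrArg Subtype.val hxy
    refine QuotientGroup.eq.mpr ?_
    rw [MonoidHom.mem_ker, powMonoidHom_apply]
    ext
    have := h (f y / y) y x y.ne_zero x.ne_zero (by field_simp) (by rw [← hxy']; field_simp)
    simpa [div_eq_inv_mul] using this

/-! ### The scattered criterion -/

/-- Corollary (part 3): `f = ∑_{i=0}^{n-1} a_i x^{q^i} ∈ F_{q^n}[x]` is scattered (i.e.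
the set of directions `{f(x)/x : x ≠ 0}`, equivalently `{c : ∃ x ≠ 0, f(x) = c·x}`, has
size `(q^n - 1)/(q - 1)`) if and only if `H_0(y)` and `H_1(y)` have no common root in
the algebraic closure of `F_q` (equivalently, in `F_{q^n}`). -/
theorem stmt_14 (p e q n : ℕ) (hp : p.Prime) (he : 0 < e) (hq : q = p ^ e)
    (hn : 0 < n) (F : Type*) [Field F] [Fintype F] (hF : Fintype.card F = q ^ n)
    (a : ℕ → F) :
    Nat.card {c : F // ∃ x : F, x ≠ 0 ∧ ∑ i ∈ Finset.range n, a i * x ^ q ^ i = c * x}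
        = (q ^ n - 1) / (q - 1) ↔
      ¬ ∃ z : AlgebraicClosure F,
          Polynomial.aeval z (Hpoly q n 0 a) = 0 ∧ Polynomial.aeval z (Hpoly q n 1 a) = 0 := by
  classical
  subst hq
  obtain ⟨k, rfl⟩ : ∃ k, n = k + 1 := ⟨n - 1, by omega⟩
  have : Fact p.Prime := ⟨hp⟩
  have : CharP F p := charP_of_card_eq_prime_pow (f := e * (k + 1)) (by
    rw [hF, pow_mul])
  have : ExpChar F p := ExpChar.prime hp
  have hq2 : 2 ≤ p ^ e := hp.two_le.trans (Nat.le_self_pow he.ne' p)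
  have hσ := frobPow_isCyclicAction (F := F) (k := k) p e hq2 hF
  have hu : ∀ u : F, u ^ (p ^ e - 1) = 1 → ∀ i : ℕ, u ^ (p ^ e) ^ i = u := by
    intro u hu i
    have hu' : u ^ p ^ e = u := by
      rw [← Nat.sub_add_cancel (one_le_two.trans hq2), pow_succ, hu, one_mul]
    induction i with
    | zero => simp
    | succ i ih => rw [pow_succ, pow_mul, ih, hu']
  have hiff := card_directions_iff (p ^ e) (k + 1) hF
    (fun x => ∑ i ∈ Finset.range (k + 1), a i * x ^ (p ^ e) ^ i) (fun u x h => by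
      rw [Finset.mul_sum]
      refine Finset.sum_congr rfl fun i _ => ?_
      rw [mul_pow, hu u h]
      ring)
  constructor
  · rintro hcard ⟨z, hz0, hz1⟩
    -- the directions `c` give enough roots `a 0 - c` of `H_0` to exhaust its degree
    obtain ⟨y, rfl⟩ : ∃ y : F, algebraMap F _ y = z := by
      obtain ⟨hne, hdeg⟩ := Hpoly_zero_degree (p ^ e) (k + 1) hq2 a
      refine root_mem_of_card _ hne ((Finset.univ.filter fun c : F => ∃ x : F, x ≠ 0 ∧
        ∑ i ∈ Finset.range (k + 1), a i * x ^ (p ^ e) ^ i = c * x).image fun c => a 0 - c)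
        ?_ ?_ z hz0
      · intro y hy
        obtain ⟨c, hc, rfl⟩ := Finset.mem_image.mp hy
        obtain ⟨x, hx, h⟩ := (Finset.mem_filter.mp hc).2
        rw [eval_Hpoly_zero]
        exact det_eq_zero_of_root hσ _ x hx ((sum_qCoeff_eq_zero_iff p e a c x).mpr h)
      · rw [Finset.card_image_of_injective _ sub_right_injective, ← Fintype.card_subtype,
          ← Nat.card_eq_fintype_card, hcard, ← Nat.geomSum_eq hq2]
        exact hdeg
    rw [aeval_algebraMap_apply, map_eq_zero, coe_aeval_eq_eval] at hz0 hz1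
    rw [eval_Hpoly_zero] at hz0
    rw [eval_Hpoly_one] at hz1
    obtain ⟨x, x', hx, hx', h, h', g, hg⟩ := exists_roots_of_minor hσ _ hz0 hz1
    rw [← sub_sub_cancel (a 0) y, sum_qCoeff_eq_zero_iff] at h h'
    have hfix := hu _ (hiff.mp hcard _ x x' hx hx' h h') g.val
    rw [div_pow, div_eq_div_iff (pow_ne_zero _ hx') hx'] at hfix
    exact hg (by rw [frobPow_apply, frobPow_apply, hfix])
  · intro hno
    refine hiff.mpr fun c x x' hx hx' h h' => ?_
    by_contra hne
    apply hno
    rw [← sum_qCoeff_eq_zero_iff] at h h'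
    refine ⟨algebraMap F _ (a 0 - c), ?_, ?_⟩
    · rw [aeval_algebraMap_apply, map_eq_zero, coe_aeval_eq_eval, eval_Hpoly_zero]
      exact det_eq_zero_of_root hσ _ x hx h
    · rw [aeval_algebraMap_apply, map_eq_zero, coe_aeval_eq_eval, eval_Hpoly_one]
      refine minor_eq_zero_of_roots hσ _ x x' h h' ?_
      by_contra! hall
      apply hne
      -- `x / x'` is fixed by all conjugations, in particular by the `q`-power map
      have hpow : (x / x') ^ p ^ e = x / x' := by
        rcases Nat.eq_zero_or_pos k with rfl | hk
        -- for `n = 1` there is no index `1`, but then `F` itself is the field with `q` elements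
        · rw [← pow_one (p ^ e), ← zero_add 1, ← hF, FiniteField.pow_card]
        · have := hall ⟨1, by omega⟩
          simp only [frobPow_apply, pow_one] at this
          rw [div_pow, div_eq_div_iff (pow_ne_zero _ hx') hx', this]
      rw [← Nat.sub_add_cancel (one_le_two.trans hq2), pow_succ] at hpow
      exact mul_right_cancel₀ (div_ne_zero hx hx') (hpow.trans (one_mul _).symm)
end

section
/- Let q be a prime power, let n ≥ 1, let f(x) = Σ_{i=0}^{n−1} a_i x^{q^i} ∈ F_{q^n}[x], and let y_0 ∈ F_{q^n}. For 1 ≤ μ ≤ n−1, the conditions H_0(y_0) = H_1(y_0) = … = H_{μ−1}(y_0) = 0 and H_μ(y_0) ≠ 0 hold if and only if the point ⟨(1, a_0 − y_0)⟩_{F_{q^n}} of PG(1, q^n) has weight μ with respect to U_f; equivalently, if and only if the q-polynomial (y_0 − a_0)x + f(x) ∈ F_{q^n}[x] induces an F_q-linear transformation of F_{q^n} whose kernel has F_q-dimension μ. -/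
/-!
Replacing `a 0` by `y0` turns both conditions into statements about one `q`-polynomial
`g(x) = ∑ b_i x^{q^i}` with Dickson matrix `D_{ij} = b_{(j-i) mod n}^{q^i}`. Row `i` of `D` holds
the coefficients of `g(x)^{q^i}` reduced modulo `x^{q^n} - x`, so a row combination `v D` holds the
coefficients of `L_v ∘ g`, where `L_v(z) = ∑ v_i z^{q^i}`. Let `d` be the `F_q`-dimension of
`ker g`, and let `M_m` be `D` without its first `m` columns and last `m` rows.

* For `m < d`, the image of `g` has dimension `n - d < n - m`, so a nonzero `L_v` with `n - m`
  coefficients vanishes on it. Then `L_v ∘ g = 0` as a function, hence `v D = 0`, and `M_m` is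
  singular (`det_minor_eq_zero`).
* If `v M_d = 0`, then `L_v ∘ g` has only the coefficients of `x^{q^j}`, `j < d`, and vanishes on
  the `q^d` elements of `ker g`; so it is zero, and `L_v`, with `n - d` coefficients, vanishes on
  the `q^{n-d}` elements of the image. Thus `v = 0` and `M_d` is invertible
  (`det_minor_ne_zero`).

Hence `d` is the least `m` with `det M_m ≠ 0`. Both bullets rest on a `q`-polynomial with `N`
coefficients being zero as soon as it vanishes at `q^N` points (`coeff_eq_zero_of_vanish`).
-/

/-- `H_m(y)` evaluated at `y ∈ F_{q^n}`: the determinant of the `(n-m) × (n-m)` matrix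
obtained from the matrix `H(y)` (the Dickson matrix of `f = ∑_{i=0}^{n-1} a_i x^{q^i}`
with each diagonal entry `a_0^{q^i}` replaced by `y^{q^i}`) by removing its first `m`
columns and last `m` rows. -/
noncomputable def Hdet (q n m : ℕ) {F : Type*} [Field F] (a : ℕ → F) (y : F) : F :=
  (Matrix.of fun i j : Fin (n - m) =>
      if i.val = j.val + m then y ^ q ^ i.val
      else a ((j.val + m + n - i.val) % n) ^ q ^ i.val).det

namespace Dickson

/-- A `q`-polynomial with `N` coefficients has degree less than `q ^ N`, so it is zero once it has
`q ^ N` roots. -/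
lemma coeff_eq_zero_of_vanish {F : Type*} [Field F] {q N : ℕ} (hq : 1 < q) (c : Fin N → F)
    (s : Finset F) (hs : q ^ N ≤ s.card)
    (h : ∀ x ∈ s, ∑ i, c i * x ^ q ^ (i : ℕ) = 0) : c = 0 := by
  classical
  set P : Polynomial F := ∑ i : Fin N, Polynomial.monomial (q ^ (i : ℕ)) (c i) with hP
  have hdeg : P.degree < (q ^ N : ℕ) := by
    rw [hP]
    refine lt_of_le_of_lt (Polynomial.degree_sum_le _ _) ?_
    rw [Finset.sup_lt_iff (WithBot.bot_lt_coe _)]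
    intro i _
    refine lt_of_le_of_lt (Polynomial.degree_monomial_le _ _) ?_
    exact_mod_cast Nat.pow_lt_pow_right hq i.2
  have h0 : P = 0 := by
    refine Polynomial.eq_zero_of_natDegree_lt_card_of_eval_eq_zero' P s ?_ ?_
    · intro x hx
      rw [hP, Polynomial.eval_finsetSum]
      simpa [Polynomial.eval_monomial] using h x hx
    · refine lt_of_lt_of_le ?_ hs
      rcases eq_or_ne P 0 with h0 | h0
      · rw [h0, Polynomial.natDegree_zero]
        positivity
      · exact (Polynomial.natDegree_lt_iff_degree_lt h0).2 hdeg
  funext k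
  have := congrArg (fun R => R.coeff (q ^ (k : ℕ))) h0
  simp only [hP, Polynomial.finsetSum_coeff, Polynomial.coeff_monomial,
    Polynomial.coeff_zero] at this
  rw [Finset.sum_eq_single k] at this
  · simpa using this
  · intro i _ hik
    rw [if_neg]
    intro he
    exact hik (Fin.ext (Nat.pow_right_injective hq he))
  · simp

section

variable (K : Type*) {F : Type*} [Field K] [Fintype K] [Field F] [Algebra K F]

/-- The `K`-linear map `x ↦ ∑ i < N, c i * x ^ q ^ i` on `F`, where `q = |K|`. -/
noncomputable def qMap {N : ℕ} (c : Fin N → F) : F →ₗ[K] F :=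
  ∑ i, c i • ((FiniteField.frobeniusAlgHom K F) ^ (i : ℕ)).toLinearMap

lemma qMap_apply {N : ℕ} (c : Fin N → F) (x : F) :
    qMap K c x = ∑ i, c i * x ^ Fintype.card K ^ (i : ℕ) := by
  simp [qMap, LinearMap.sum_apply, AlgHom.coe_pow, FiniteField.coe_frobeniusAlgHom, pow_iterate]

/-- The entry `b_{(j-i) mod n}^{q^i}` in row `i < n` and column `j` of the Dickson matrix of
`∑ i < n, b i * x ^ q ^ i`. -/
def entry {F : Type*} [Field F] (q n : ℕ) (b : ℕ → F) (i j : ℕ) : F :=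
  b ((j + n - i) % n) ^ q ^ i

/-- The Dickson matrix with its first `m` columns and last `m` rows removed. -/
def minor {F : Type*} [Field F] (q n : ℕ) (b : ℕ → F) (m : ℕ) :
    Matrix (Fin (n - m)) (Fin (n - m)) F :=
  Matrix.of fun i j => entry q n b i (j + m)

variable [Fintype F]

/-- Row `i` of the Dickson matrix holds the coefficients of the `q^i`-th power of the
polynomial. -/
lemma sum_entry {n : ℕ} (hn : Module.finrank K F = n) (b : ℕ → F) {i : ℕ} (hi : i < n) (x : F) :
    ∑ j : Fin n, entry (Fintype.card K) n b i j * x ^ Fintype.card K ^ (j : ℕ)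
      = (qMap K (fun k : Fin n => b k) x) ^ Fintype.card K ^ i := by
  set q := Fintype.card K with hq
  have hcard : Fintype.card F = q ^ n := by rw [Module.card_eq_pow_finrank (K := K), hn]
  have hpow : ∀ y : F, ((FiniteField.frobeniusAlgHom K F) ^ i) y = y ^ q ^ i := by
    intro y
    simp [AlgHom.coe_pow, FiniteField.coe_frobeniusAlgHom, pow_iterate, hq]
  rw [← hpow, qMap_apply, map_sum]
  simp only [hpow, ← hq]
  rw [Fin.sum_univ_eq_sum_range (fun j => entry q n b i j * x ^ q ^ j) n,
    Fin.sum_univ_eq_sum_range (fun k => (b k * x ^ q ^ k) ^ q ^ i) n]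
  have hmod : ∀ j < n, ((j + n - i) % n + i) % n = j := by
    intro j hj
    rw [Nat.mod_add_mod, show j + n - i + i = j + n by omega, Nat.add_mod_right,
      Nat.mod_eq_of_lt hj]
  refine Finset.sum_nbij' (fun j => (j + n - i) % n) (fun k => (k + i) % n) ?_ ?_ ?_ ?_ ?_
  · intro j _; exact Finset.mem_range.2 (Nat.mod_lt _ (by omega))
  · intro j _; exact Finset.mem_range.2 (Nat.mod_lt _ (by omega))
  · intro j hj; exact hmod j (Finset.mem_range.1 hj)
  · intro k hk
    have hk := Finset.mem_range.1 hk
    show ((k + i) % n + n - i) % n = k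
    rw [Nat.add_sub_assoc hi.le, Nat.mod_add_mod, show k + i + (n - i) = k + n by omega,
      Nat.add_mod_right, Nat.mod_eq_of_lt hk]
  · intro j hj
    have hj := Finset.mem_range.1 hj
    rw [entry, mul_pow, ← pow_mul, ← pow_add]
    congr 1
    -- exponents agree modulo `n`, and `x ^ q ^ n = x`
    have hper : ∀ t, x ^ q ^ (j + n * t) = x ^ q ^ j := by
      intro t
      rw [pow_add, pow_mul, pow_mul q n t, ← hcard, FiniteField.pow_card_pow]
    have := Nat.mod_add_div ((j + n - i) % n + i) n
    rw [hmod j hj] at this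
    rw [← this, hper]

/-- A row combination of the first `n - m` rows of the Dickson matrix holds the coefficients of
the composite of the corresponding `q`-polynomial with the given one. -/
lemma qMap_comp {n : ℕ} (hn : Module.finrank K F = n) (b : ℕ → F) (m : ℕ)
    (v : Fin (n - m) → F) (x : F) :
    qMap K v (qMap K (fun k : Fin n => b k) x)
      = qMap K (fun j : Fin n => ∑ i, v i * entry (Fintype.card K) n b i j) x := by
  rw [qMap_apply, qMap_apply K (fun j : Fin n => ∑ i, v i * entry (Fintype.card K) n b i j)]
  simp_rw [Finset.sum_mul]
  rw [Finset.sum_comm]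
  refine Finset.sum_congr rfl fun i _ => ?_
  rw [← sum_entry K hn b (by omega : (i : ℕ) < n), Finset.mul_sum]
  simp_rw [mul_assoc]

/-- A `q`-polynomial vanishing on a subspace of dimension at least its number of coefficients is
zero. -/
lemma eq_zero_of_vanish_submodule {N : ℕ} (c : Fin N → F) (W : Submodule K F)
    (hW : N ≤ Module.finrank K W) (h : ∀ x ∈ W, qMap K c x = 0) : c = 0 := by
  classical
  refine coeff_eq_zero_of_vanish (q := Fintype.card K) Fintype.one_lt_card c
    (Finset.univ.filter (· ∈ W)) ?_ ?_
  · rw [← Fintype.card_subtype, Module.card_eq_pow_finrank (K := K) (V := W)]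
    exact Nat.pow_le_pow_right Fintype.card_pos hW
  · intro x hx
    rw [← qMap_apply]
    exact h x (by simpa using hx)

/-- Below the kernel dimension the minors vanish. -/
lemma det_minor_eq_zero {n : ℕ} (hn : Module.finrank K F = n) (b : ℕ → F) {m : ℕ}
    (hm : m < Module.finrank K (qMap K (fun k : Fin n => b k)).ker) :
    (minor (Fintype.card K) n b m).det = 0 := by
  set g := qMap K (fun k : Fin n => b k) with hg
  have hrn : Module.finrank K g.range + Module.finrank K g.ker = n := by
    rw [LinearMap.finrank_range_add_finrank_ker, hn]
  set r := Module.finrank K g.range with hr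
  let B : Module.Basis (Fin r) K g.range := Module.finBasis K g.range
  -- evaluation of the `q`-polynomial with coefficients `c` at a basis of the image of `g`
  let T : (Fin (n - m) → F) →ₗ[F] (Fin r → F) :=
    (Matrix.of fun (k : Fin r) (i : Fin (n - m)) =>
      (B k : F) ^ Fintype.card K ^ (i : ℕ)).mulVecLin
  have hT : T.ker ≠ ⊥ := LinearMap.ker_ne_bot_of_finrank_lt (by simp; omega)
  obtain ⟨v, hv, hv0⟩ := Submodule.exists_mem_ne_zero_of_ne_bot hT
  have hvB : ∀ k, qMap K v (B k : F) = 0 := by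
    intro k
    have := congrFun (LinearMap.mem_ker.1 hv) k
    rw [qMap_apply]
    simpa [T, Matrix.mulVec, dotProduct, mul_comm] using this
  have hvr : ∀ x, qMap K v (g x) = 0 := by
    have : (qMap K v).comp g.range.subtype = 0 := B.ext fun k => by simpa using hvB k
    intro x
    exact LinearMap.congr_fun this ⟨g x, x, rfl⟩
  have he := eq_zero_of_vanish_submodule K
    (fun j : Fin n => ∑ i, v i * entry (Fintype.card K) n b i j) ⊤ (by simp [hn])
    (fun x _ => by rw [← qMap_comp K hn, hvr])
  refine Matrix.exists_vecMul_eq_zero_iff.1 ⟨v, hv0, ?_⟩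
  funext j
  exact congrFun he ⟨j + m, by omega⟩

/-- At the kernel dimension the minor does not vanish. -/
lemma det_minor_ne_zero {n : ℕ} (hn : Module.finrank K F = n) (b : ℕ → F) :
    (minor (Fintype.card K) n b
      (Module.finrank K (qMap K (fun k : Fin n => b k)).ker)).det ≠ 0 := by
  set g := qMap K (fun k : Fin n => b k) with hg
  have hrn : Module.finrank K g.range + Module.finrank K g.ker = n := by
    rw [LinearMap.finrank_range_add_finrank_ker, hn]
  set d := Module.finrank K g.ker with hd
  intro hdet
  obtain ⟨v, hv0, hv⟩ := Matrix.exists_vecMul_eq_zero_iff.2 hdet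
  set ε : ℕ → F := fun j => ∑ i, v i * entry (Fintype.card K) n b i j with hε
  have hcomp : ∀ x, qMap K v (g x) = qMap K (fun j : Fin n => ε j) x := qMap_comp K hn b d v
  have hhigh : ∀ j, d ≤ j → j < n → ε j = 0 := by
    intro j hj hjn
    have := congrFun hv ⟨j - d, by omega⟩
    simpa [Matrix.vecMul, dotProduct, minor, hε, Nat.sub_add_cancel hj] using this
  have htrunc : ∀ x, qMap K (fun j : Fin n => ε j) x = qMap K (fun j : Fin d => ε j) x := by
    intro x
    rw [qMap_apply, qMap_apply,
      Fin.sum_univ_eq_sum_range (fun j => ε j * x ^ Fintype.card K ^ j) n,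
      Fin.sum_univ_eq_sum_range (fun j => ε j * x ^ Fintype.card K ^ j) d]
    symm
    refine Finset.sum_subset (Finset.range_mono (by omega)) fun j hj hjd => ?_
    rw [hhigh j (by simpa using hjd) (by simpa using hj), zero_mul]
  have hlow : (fun j : Fin d => ε j) = 0 :=
    eq_zero_of_vanish_submodule K _ g.ker hd.le fun x hx => by
      rw [← htrunc, ← hcomp, LinearMap.mem_ker.1 hx, map_zero]
  refine hv0 (eq_zero_of_vanish_submodule K v g.range (by omega) ?_)
  rintro _ ⟨x, rfl⟩
  rw [hcomp, htrunc, hlow, qMap_apply]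
  simp

/-- The kernel dimension is characterised as the least `m` with nonvanishing minor. -/
lemma minors_iff {n : ℕ} (hn : Module.finrank K F = n) (b : ℕ → F) (μ : ℕ) :
    ((∀ m, m < μ → (minor (Fintype.card K) n b m).det = 0) ∧
        (minor (Fintype.card K) n b μ).det ≠ 0) ↔
      Nat.card (qMap K (fun k : Fin n => b k)).ker = Fintype.card K ^ μ := by
  rw [Module.natCard_eq_pow_finrank (K := K) (V := (qMap K (fun k : Fin n => b k)).ker),
    Nat.card_eq_fintype_card (α := K), (Nat.pow_right_injective (Fintype.one_lt_card (α := K))).eq_iff]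
  constructor
  · rintro ⟨h1, h2⟩
    refine le_antisymm (not_lt.1 fun h => h2 (det_minor_eq_zero K hn b h)) ?_
    exact not_lt.1 fun h => det_minor_ne_zero K hn b (h1 _ h)
  · rintro rfl
    exact ⟨fun m hm => det_minor_eq_zero K hn b hm, det_minor_ne_zero K hn b⟩

end

lemma Hdet_eq_minor {F : Type*} [Field F] (q n m : ℕ) (a : ℕ → F) (y : F) :
    Hdet q n m a y = (minor q n (Function.update a 0 y) m).det := by
  unfold Hdet
  congr 1
  ext i j
  have hi := i.2
  have hj := j.2
  simp only [minor, entry, Matrix.of_apply]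
  split_ifs with h
  · rw [show (j : ℕ) + m + n - i = n by omega, Nat.mod_self, Function.update_self]
  · rw [Function.update_of_ne]
    intro h0
    -- the index lies strictly between `0` and `2n` and differs from `n`
    obtain ⟨t, ht⟩ := Nat.dvd_of_mod_eq_zero h0
    have ht0 : 0 < t := Nat.pos_of_ne_zero (by rintro rfl; omega)
    have ht2 : t < 2 := by
      by_contra hc
      have := Nat.mul_le_mul_left n (not_lt.1 hc)
      omega
    obtain rfl : t = 1 := by omega
    omega

/-- A field with `q ^ n` elements is an extension of degree `n` of some field with `q`
elements. -/
lemma exists_subfield (p e q n : ℕ) (hp : p.Prime) (he : 0 < e) (hq : q = p ^ e)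
    (F : Type*) [Field F] [Fintype F] (hF : Fintype.card F = q ^ n) :
    ∃ (K : Type) (_ : Field K) (_ : Fintype K) (_ : Algebra K F),
      Fintype.card K = q ∧ Module.finrank K F = n := by
  have : Fact p.Prime := ⟨hp⟩
  have hF' : Fintype.card F = p ^ (e * n) := by rw [hF, hq, pow_mul]
  have : CharP F p := charP_of_card_eq_prime_pow hF'
  let : Algebra (ZMod p) F := ZMod.algebra F p
  have hrank : Module.finrank (ZMod p) F = e * n := by
    have := Module.card_eq_pow_finrank (K := ZMod p) (V := F)
    rw [hF', ZMod.card] at this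
    exact (Nat.pow_right_injective hp.two_le this).symm
  obtain ⟨φ⟩ := FiniteField.nonempty_algHom_of_finrank_dvd (F := ZMod p)
    (K := GaloisField p e) (L := F) (by rw [GaloisField.finrank p he.ne', hrank]; exact ⟨n, rfl⟩)
  let : Fintype (GaloisField p e) := Fintype.ofFinite _
  let : Algebra (GaloisField p e) F := φ.toRingHom.toAlgebra
  have hK : Fintype.card (GaloisField p e) = q := by
    rw [← Nat.card_eq_fintype_card, GaloisField.card p e he.ne', hq]
  refine ⟨GaloisField p e, inferInstance, inferInstance, inferInstance, hK, ?_⟩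
  have := Module.card_eq_pow_finrank (K := GaloisField p e) (V := F)
  rw [hF, hK] at this
  refine (Nat.pow_right_injective ?_ this).symm
  rw [← hK]
  exact Fintype.one_lt_card

end Dickson

/-- For `f = ∑_{i=0}^{n-1} a_i x^{q^i} ∈ F_{q^n}[x]`, `y₀ ∈ F_{q^n}`, `1 ≤ μ ≤ n-1`:
`H_0(y₀) = ⋯ = H_{μ-1}(y₀) = 0` and `H_μ(y₀) ≠ 0` hold iff the point
`⟨(1, a_0 - y₀)⟩` of `PG(1,q^n)` has weight `μ` w.r.t. `U_f`, i.e. iff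
`#{x : f(x) = (a_0 - y₀)·x} = q^μ`; equivalently, iff the kernel of the `F_q`-linear map
induced by `(y₀ - a_0)x + f(x)` has `F_q`-dimension `μ`, i.e.
`#{x : (y₀ - a_0)·x + f(x) = 0} = q^μ`. -/
theorem stmt_15 (p e q n : ℕ) (hp : p.Prime) (he : 0 < e) (hq : q = p ^ e)
    (hn : 0 < n) (F : Type*) [Field F] [Fintype F] (hF : Fintype.card F = q ^ n)
    (a : ℕ → F) (y0 : F) (μ : ℕ) (hμ1 : 1 ≤ μ) (hμ2 : μ ≤ n - 1) :
    (((∀ m, m < μ → Hdet q n m a y0 = 0) ∧ Hdet q n μ a y0 ≠ 0) ↔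
        Nat.card {x : F // ∑ i ∈ Finset.range n, a i * x ^ q ^ i = (a 0 - y0) * x}
          = q ^ μ) ∧
    (((∀ m, m < μ → Hdet q n m a y0 = 0) ∧ Hdet q n μ a y0 ≠ 0) ↔
        Nat.card {x : F // (y0 - a 0) * x + ∑ i ∈ Finset.range n, a i * x ^ q ^ i = 0}
          = q ^ μ) := by
  obtain ⟨K, _, _, _, hK, hrank⟩ := Dickson.exists_subfield p e q n hp he hq F hF
  have key := Dickson.minors_iff K hrank (Function.update a 0 y0) μ
  rw [hK] at key
  simp_rw [← Dickson.Hdet_eq_minor] at key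
  have hg : ∀ x : F, Dickson.qMap K (fun k : Fin n => Function.update a 0 y0 k) x
      = (y0 - a 0) * x + ∑ i ∈ Finset.range n, a i * x ^ q ^ i := by
    intro x
    rw [Dickson.qMap_apply, hK,
      Fin.sum_univ_eq_sum_range (fun k => Function.update a 0 y0 k * x ^ q ^ k) n]
    obtain ⟨k, rfl⟩ := Nat.exists_eq_succ_of_ne_zero hn.ne'
    rw [Finset.sum_range_succ', Finset.sum_range_succ']
    simp
    ring
  have h2 : Nat.card {x : F // (y0 - a 0) * x + ∑ i ∈ Finset.range n, a i * x ^ q ^ i = 0}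
      = Nat.card (Dickson.qMap K (fun k : Fin n => Function.update a 0 y0 k)).ker :=
    Nat.card_congr (Equiv.subtypeEquivRight fun x => by rw [LinearMap.mem_ker, hg])
  have h1 : Nat.card {x : F // ∑ i ∈ Finset.range n, a i * x ^ q ^ i = (a 0 - y0) * x}
      = Nat.card {x : F // (y0 - a 0) * x + ∑ i ∈ Finset.range n, a i * x ^ q ^ i = 0} :=
    Nat.card_congr (Equiv.subtypeEquivRight fun x => by
      constructor <;> intro h <;> linear_combination h)
  rw [h1, h2]
  exact ⟨key, key⟩
end
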